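/- Let W and V be real inner product spaces, D : W →ₗ[ℝ] V a linear map, k > 0, Δt > 0 real constants and c = k⁻¹. Let v, q : ℕ → V and σ : ℕ → W satisfy the trapezoidal reconstruction q(n+1) = q(n) + (Δt/2) • (v(n) + v(n+1)) for all n ∈ ℕ, together with the initial constraint: for all ξ ∈ W, c⟪ξ, σ 0⟫ = −⟪D ξ, q 0⟫. Then the following are equivalent: (a) for all n ∈ ℕ and all ξ ∈ W, c⟪ξ, (1/2) • (σ(n) + σ(n+1))⟫ = −⟪D ξ, (1/2) • (q(n) + q(n+1))⟫; (b) for all n ∈ ℕ and all ξ ∈ W, c⟪ξ, σ(n+1) − σ(n)⟫ = −Δt⟪D ξ, (1/2) • (v(n) + v(n+1))⟫. -/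

import Mathlib

open scoped RealInnerProductSpace

/-! The pairs (stress, displacement) satisfying the constraint form a subspace of `W × V`.
Scheme (a) says that the half-step averages of `(σ n, q n)` lie in this subspace and, because of
the trapezoidal rule, scheme (b) says that the increments do. Since the initial pair lies in the
subspace, each condition is equivalent to all the pairs `(σ n, q n)` lying in it. -/

section Sequences

variable {S G : Type*} [AddGroup G] [SetLike S G] [AddSubgroupClass S G] {H : S} {x : ℕ → G}

theorem forall_add_succ_mem_iff (h₀ : x 0 ∈ H) :
    (∀ n, x n + x (n + 1) ∈ H) ↔ ∀ n, x n ∈ H := by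
  refine ⟨fun h n => ?_, fun h n => add_mem (h n) (h (n + 1))⟩
  induction n with
  | zero => exact h₀
  | succ n ih => exact (add_mem_cancel_left ih).mp (h n)

theorem forall_succ_sub_mem_iff (h₀ : x 0 ∈ H) :
    (∀ n, x (n + 1) - x n ∈ H) ↔ ∀ n, x n ∈ H := by
  refine ⟨fun h n => ?_, fun h n => sub_mem (h (n + 1)) (h n)⟩
  induction n with
  | zero => exact h₀
  | succ n ih => simpa only [sub_add_cancel] using add_mem (h n) ih

end Sequences

theorem succ_sub_eq_of_trapezoidal {𝕜 V : Type*} [DivisionRing 𝕜] [AddCommGroup V] [Module 𝕜 V]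
    {Δt : 𝕜} {v q : ℕ → V} (hq : ∀ n, q (n + 1) = q n + (Δt / 2) • (v n + v (n + 1))) (n : ℕ) :
    q (n + 1) - q n = Δt • (1 / 2 : 𝕜) • (v n + v (n + 1)) := by
  rw [hq, add_sub_cancel_left, smul_smul, mul_one_div]

section Constraint

variable {𝕜 W V : Type*} [RCLike 𝕜] [SeminormedAddCommGroup W] [InnerProductSpace 𝕜 W]
  [SeminormedAddCommGroup V] [InnerProductSpace 𝕜 V]

/-- The space of pairs (stress `s`, displacement `u`) satisfying the discrete constitutive
constraint of the mixed formulation with compliance `c`, tested against all stresses `ξ`.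
The discrete divergence `D` is encoded as a bare function, since it acts on test stresses only. -/
def constraintSubmodule (D : W → V) (c : 𝕜) : Submodule 𝕜 (W × V) where
  carrier := {p | ∀ ξ : W, c * inner 𝕜 ξ p.1 = -inner 𝕜 (D ξ) p.2}
  zero_mem' ξ := by simp
  add_mem' {p r} hp hr ξ := by
    simp only [Prod.fst_add, Prod.snd_add, inner_add_right, mul_add, hp ξ, hr ξ, neg_add]
  smul_mem' a p hp ξ := by
    simp only [Prod.smul_fst, Prod.smul_snd, inner_smul_right, mul_left_comm c a, hp ξ, mul_neg]

variable {D : W → V} {c : 𝕜}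

theorem mem_constraintSubmodule {p : W × V} :
    p ∈ constraintSubmodule D c ↔ ∀ ξ : W, c * inner 𝕜 ξ p.1 = -inner 𝕜 (D ξ) p.2 :=
  Iff.rfl

theorem mk_smul_mem_constraintSubmodule {s : W} {a : 𝕜} {w : V} :
    (s, a • w) ∈ constraintSubmodule D c ↔
      ∀ ξ : W, c * inner 𝕜 ξ s = -(a * inner 𝕜 (D ξ) w) := by
  simp only [mem_constraintSubmodule, inner_smul_right]

theorem mk_half_smul_mem_constraintSubmodule {p r : W × V} :
    ((1 / 2 : 𝕜) • (p.1 + r.1), (1 / 2 : 𝕜) • (p.2 + r.2)) ∈ constraintSubmodule D c ↔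
      p + r ∈ constraintSubmodule D c :=
  Submodule.smul_mem_iff (x := p + r) _ (one_div_ne_zero (two_ne_zero (α := 𝕜)))

theorem stmt10_general (D : W → V) (Δt c : 𝕜) (v q : ℕ → V) (σ : ℕ → W)
    (hq : ∀ n : ℕ, q (n + 1) = q n + (Δt / 2) • (v n + v (n + 1)))
    (hinit : ∀ ξ : W, c * inner 𝕜 ξ (σ 0) = -inner 𝕜 (D ξ) (q 0)) :
    (∀ n : ℕ, ∀ ξ : W, c * inner 𝕜 ξ ((1 / 2 : 𝕜) • (σ n + σ (n + 1))) =
        -inner 𝕜 (D ξ) ((1 / 2 : 𝕜) • (q n + q (n + 1)))) ↔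
    (∀ n : ℕ, ∀ ξ : W, c * inner 𝕜 ξ (σ (n + 1) - σ n) =
        -(Δt * inner 𝕜 (D ξ) ((1 / 2 : 𝕜) • (v n + v (n + 1))))) := by
  let x (n : ℕ) : W × V := (σ n, q n)
  let K := constraintSubmodule D c
  have h₀ : x 0 ∈ K := hinit
  have increment (n : ℕ) :
      x (n + 1) - x n = (σ (n + 1) - σ n, Δt • (1 / 2 : 𝕜) • (v n + v (n + 1))) :=
    Prod.ext rfl (succ_sub_eq_of_trapezoidal hq n)
  calc
    _ ↔ ∀ n, x n + x (n + 1) ∈ K := forall_congr' fun _ => mk_half_smul_mem_constraintSubmodule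
    _ ↔ ∀ n, x n ∈ K := forall_add_succ_mem_iff h₀
    _ ↔ ∀ n, x (n + 1) - x n ∈ K := (forall_succ_sub_mem_iff h₀).symm
    _ ↔ _ := forall_congr' fun n => by rw [increment n, mk_smul_mem_constraintSubmodule]

end Constraint

theorem stmt10 {W V : Type*} [NormedAddCommGroup W] [InnerProductSpace ℝ W]
    [NormedAddCommGroup V] [InnerProductSpace ℝ V]
    (D : W →ₗ[ℝ] V) (k Δt c : ℝ) (hk : 0 < k) (hΔt : 0 < Δt) (hc : c = k⁻¹)
    (v q : ℕ → V) (σ : ℕ → W)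
    (hq : ∀ n : ℕ, q (n + 1) = q n + (Δt / 2) • (v n + v (n + 1)))
    (hinit : ∀ ξ : W, c * ⟪ξ, σ 0⟫ = -⟪D ξ, q 0⟫) :
    (∀ n : ℕ, ∀ ξ : W, c * ⟪ξ, (1 / 2 : ℝ) • (σ n + σ (n + 1))⟫ =
        -⟪D ξ, (1 / 2 : ℝ) • (q n + q (n + 1))⟫) ↔
    (∀ n : ℕ, ∀ ξ : W, c * ⟪ξ, σ (n + 1) - σ n⟫ =
        -(Δt * ⟪D ξ, (1 / 2 : ℝ) • (v n + v (n + 1))⟫)) :=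
  stmt10_general D Δt c v q σ hq hinit
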